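/- The set of rational solutions (V, U) of the equation U² = V³ + 1 is exactly {(−1, 0), (0, 1), (0, −1), (2, 3), (2, −3)}. -/

import Mathlib

/-!
Put `t = V + 1`, so that the equation reads `U² = t (t² - 3t + 3)`, and write `t = c / b` in lowest
terms. Then `b c (c² - 3bc + 3b²)` is a perfect square whose three factors are pairwise coprime
apart from a possible factor `3`; after replacing `t` by `3 / t` when `3 ∣ c`, each factor is a
square, which gives a coprime solution of the quartic `N² = M⁴ - 3M²e² + 3e⁴` (`square_product`).

The heart of the proof is Euler's infinite descent on this quartic (`quartic`), which shows that a
coprime solution with `e ≠ 0` has `M² = e² = 1`. Since `4N² = (2M² - 3e²)² + 3e⁴`, the number `3e⁴`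
is a product of two factors that are coprime up to powers of `2`, hence of the form `v⁴`, `3u⁴`; the
resulting equation exhibits a second factorization of the same shape, into `g⁴` and `3h⁴`, and
comparing the two gives a new solution `(g, h)` of the quartic with `h ∣ e`.
-/

/-- Two coprime positive integers with product `3w⁴` are, in some order, `g⁴` and `3h⁴`. -/
lemma fourth_power_split {a b w : ℤ} (ha : 0 < a) (hb : 0 < b) (hab : IsCoprime a b)
    (h : a * b = 3 * w ^ 4) :
    ∃ g k : ℤ, g ^ 2 * k ^ 2 = w ^ 2 ∧
      ((a = g ^ 4 ∧ b = 3 * k ^ 4) ∨ (a = 3 * k ^ 4 ∧ b = g ^ 4)) := by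
  wlog h3 : (3 : ℤ) ∣ b generalizing a b
  · have h3a : (3 : ℤ) ∣ a :=
      (Int.prime_three.dvd_or_dvd (Dvd.intro _ h.symm)).resolve_right h3
    obtain ⟨g, k, hw, hgk⟩ := this hb ha hab.symm (by rw [mul_comm, h]) h3a
    exact ⟨g, k, hw, hgk.symm.imp And.symm And.symm⟩
  obtain ⟨c, rfl⟩ := h3
  have hc : 0 < c := by omega
  have hac : a * c = w ^ 4 := by linarith
  have hcop : IsCoprime a c := hab.of_isCoprime_of_dvd_right (Dvd.intro_left _ rfl)
  have hnat : a.natAbs * c.natAbs = w.natAbs ^ 4 := by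
    rw [← Int.natAbs_mul, hac, Int.natAbs_pow]
  have hcopn : IsUnit (gcd a.natAbs c.natAbs) := by
    rw [Nat.isUnit_iff]; exact Int.isCoprime_iff_gcd_eq_one.mp hcop
  obtain ⟨g, hg⟩ := exists_eq_pow_of_mul_eq_pow hcopn hnat
  obtain ⟨k, hk⟩ := exists_eq_pow_of_mul_eq_pow
    (by rwa [gcd_comm] at hcopn) ((mul_comm _ _).trans hnat)
  have hg' : a = (g : ℤ) ^ 4 := by
    rw [← Int.natAbs_of_nonneg ha.le, hg]; push_cast; rfl
  have hk' : c = (k : ℤ) ^ 4 := by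
    rw [← Int.natAbs_of_nonneg hc.le, hk]; push_cast; rfl
  refine ⟨g, k, ?_, Or.inl ⟨hg', by rw [hk']⟩⟩
  have : ((g : ℤ) ^ 2 * k ^ 2) ^ 2 = (w ^ 2) ^ 2 := by
    rw [hg', hk'] at hac; linear_combination hac
  exact (pow_left_inj₀ (by positivity) (by positivity) two_ne_zero).mp this

lemma isCoprime_of_prime {a b : ℤ} (h : ∀ p : ℤ, Prime p → p ∣ a → p ∣ b → False) :
    IsCoprime a b := by
  rw [Int.isCoprime_iff_gcd_eq_one]
  by_contra hne
  obtain ⟨p, hp, hpd⟩ := Nat.exists_prime_and_dvd hne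
  have hd : (p : ℤ) ∣ (Int.gcd a b : ℤ) := by exact_mod_cast hpd
  exact h p (Nat.prime_iff_prime_int.mp hp) (hd.trans (Int.gcd_dvd_left ..))
    (hd.trans (Int.gcd_dvd_right ..))

lemma prime_dvd_three {p : ℤ} (hp : Prime p) (h : p ∣ 3) : (3 : ℤ) ∣ p :=
  ((hp.associated_of_dvd Int.prime_three h).symm).dvd

/-- Coprimality of two factors of `3w⁴`: a common prime factor divides `w` or `3`, hence, by
hypothesis, also `M`, and `M` is prime to `3w`. -/
lemma isCoprime_factors {a b w M : ℤ} (h : a * b = 3 * w ^ 4) (hM : ¬ (3 : ℤ) ∣ M)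
    (hMw : IsCoprime M w)
    (hp : ∀ p : ℤ, Prime p → p ∣ a → p ∣ b → (p ∣ w ∨ p ∣ 3) → p ∣ M) : IsCoprime a b := by
  refine isCoprime_of_prime fun p pp ha hb => ?_
  have h1 : p ∣ 3 * w ^ 4 := h ▸ ha.mul_right b
  have h2 : p ∣ w ∨ p ∣ 3 :=
    (pp.dvd_or_dvd h1).symm.imp pp.dvd_of_dvd_pow id
  have hpM := hp p pp ha hb h2
  rcases h2 with h2 | h2
  · exact pp.not_isUnit (hMw.isUnit_of_dvd' hpM h2)
  · exact hM ((prime_dvd_three pp h2).trans hpM)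

/-- A solution of `M² ≡ -u⁴ (mod 3)` has `3 ∣ M`. -/
lemma three_dvd_of_neg {M u x : ℤ} (h : M ^ 2 + (u ^ 2) ^ 2 = 3 * x) : (3 : ℤ) ∣ M := by
  generalize u ^ 2 = s at h
  have h1 : M % 3 = 0 ∨ M % 3 = 1 ∨ M % 3 = 2 := by omega
  have h2 : s % 3 = 0 ∨ s % 3 = 1 ∨ s % 3 = 2 := by omega
  have h3 : (M ^ 2 + s ^ 2) % 3 = 0 := by omega
  rcases h1 with h1 | h1 | h1 <;> rcases h2 with h2 | h2 | h2 <;>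
    simp [pow_two, Int.add_emod, Int.mul_emod, h1, h2] at h3 <;> omega

/-- The second half of a descent step: coprime positive `a`, `b` with product `3u⁴` and sum
`v² + 3u²` are `g⁴` and `3k⁴` with `u² = g²k²`, so that `(g, k)` solves the quartic with square root
`v`. -/
lemma second_step {a b u v : ℤ} (ha : 0 < a) (hb : 0 < b) (hab : IsCoprime a b)
    (h : a * b = 3 * u ^ 4) (hsum : a + b = v ^ 2 + 3 * u ^ 2) :
    ∃ g k : ℤ, IsCoprime g k ∧ g ^ 2 * k ^ 2 = u ^ 2 ∧
      v ^ 2 = g ^ 4 - 3 * g ^ 2 * k ^ 2 + 3 * k ^ 4 := by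
  obtain ⟨g, k, hw, hgk⟩ := fourth_power_split ha hb hab h
  refine ⟨g, k, ?_, hw, ?_⟩
  · rcases hgk with ⟨rfl, rfl⟩ | ⟨rfl, rfl⟩
    · exact (IsCoprime.pow_iff (by norm_num) (by norm_num)).mp hab.of_mul_right_right
    · exact (IsCoprime.pow_iff (by norm_num) (by norm_num)).mp hab.of_mul_left_right.symm
  · rcases hgk with ⟨rfl, rfl⟩ | ⟨rfl, rfl⟩ <;> linear_combination -hsum + 3 * hw

lemma pos_of_mul_of_add {a b : ℤ} (hm : 0 < a * b) (hs : 0 < a + b) : 0 < a ∧ 0 < b := by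
  rcases pos_and_pos_or_neg_and_neg_of_mul_pos hm with h | h
  · exact h
  · omega

lemma not_three_dvd {M e N : ℤ} (hc : IsCoprime M e)
    (h : N ^ 2 = M ^ 4 - 3 * M ^ 2 * e ^ 2 + 3 * e ^ 4) : ¬ (3 : ℤ) ∣ M := by
  rintro ⟨m, rfl⟩
  have h3N : (3 : ℤ) ∣ N := Int.prime_three.dvd_of_dvd_pow
    (n := 2) ⟨27 * m ^ 4 - 9 * m ^ 2 * e ^ 2 + e ^ 4, by rw [h]; ring⟩
  obtain ⟨n, rfl⟩ := h3N
  have h3e : (3 : ℤ) ∣ e := Int.prime_three.dvd_of_dvd_pow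
    (n := 4) ⟨n ^ 2 - 9 * m ^ 4 + 3 * m ^ 2 * e ^ 2, by linarith⟩
  exact Int.prime_three.not_isUnit (hc.isUnit_of_dvd' (Dvd.intro _ rfl) h3e)

/-- If `e` is odd, a solution of the quartic leads to a solution `(g, k)` with `e² = g²k²v²`. -/
lemma descent_odd {M e N : ℤ} (hc : IsCoprime M e) (hodd : Odd e) (hN : 0 < N)
    (h : N ^ 2 = M ^ 4 - 3 * M ^ 2 * e ^ 2 + 3 * e ^ 4) :
    ∃ g k v : ℤ, IsCoprime g k ∧ g ^ 2 * k ^ 2 * v ^ 2 = e ^ 2 ∧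
      v ^ 2 = g ^ 4 - 3 * g ^ 2 * k ^ 2 + 3 * k ^ 4 ∧
      4 * M ^ 2 = v ^ 4 + 6 * (g ^ 2 * k ^ 2) * v ^ 2 - 3 * (g ^ 2 * k ^ 2) ^ 2 := by
  have h3 := not_three_dvd hc h
  have he : e ≠ 0 := by rintro rfl; simp at hodd
  have hAB : (2 * N - 2 * M ^ 2 + 3 * e ^ 2) * (2 * N + 2 * M ^ 2 - 3 * e ^ 2) = 3 * e ^ 4 := by
    linear_combination 4 * h
  obtain ⟨hA, hB⟩ := pos_of_mul_of_add (hAB.symm ▸ (by positivity : 0 < 3 * e ^ 4))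
    (by linarith)
  have hAo : Odd (2 * N - 2 * M ^ 2 + 3 * e ^ 2) := by
    obtain ⟨x, hx⟩ := hodd.pow (n := 2)
    exact ⟨N - M ^ 2 + 3 * x + 1, by rw [hx]; ring⟩
  have hcop := isCoprime_factors hAB h3 hc fun p pp ha hb hp => by
    have hp2 : ¬ p ∣ 2 := fun h2 => by
      have := (pp.associated_of_dvd Int.prime_two h2).symm.dvd.trans ha
      exact (Int.not_even_iff_odd.mpr hAo) (even_iff_two_dvd.mpr this)
    have h1 : p ∣ 3 * e ^ 2 := by
      rcases hp with hp | hp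
      · exact (hp.pow two_ne_zero).mul_left _
      · exact hp.mul_right _
    have h2 : p ∣ 2 * (2 * M ^ 2) := by
      rw [show 2 * (2 * M ^ 2) = (2 * N + 2 * M ^ 2 - 3 * e ^ 2) -
        (2 * N - 2 * M ^ 2 + 3 * e ^ 2) + 2 * (3 * e ^ 2) by ring]
      exact dvd_add (dvd_sub hb ha) (h1.mul_left 2)
    exact pp.dvd_of_dvd_pow
      ((pp.dvd_or_dvd ((pp.dvd_or_dvd h2).resolve_left hp2)).resolve_left hp2)
  obtain ⟨v, u, hw, hvu⟩ := fourth_power_split hA hB hcop hAB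
  rcases hvu with ⟨hA', hB'⟩ | ⟨hA', hB'⟩
  · exact absurd (three_dvd_of_neg (M := M) (u := v)
      (x := u ^ 4 + 2 * v ^ 2 * u ^ 2 - M ^ 2) (by
        linear_combination -hA' + hB' - 6 * hw)) h3
  have hM : 4 * M ^ 2 = v ^ 4 + 6 * u ^ 2 * v ^ 2 - 3 * u ^ 4 := by
    linear_combination -hA' + hB' - 6 * hw
  have hvuo : Odd (v ^ 2 * u ^ 2) := hw ▸ hodd.pow
  obtain ⟨hvo, huo⟩ := Int.odd_mul.mp hvuo
  obtain ⟨K, hK⟩ : ∃ K, v ^ 2 + 3 * u ^ 2 = 2 * K := by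
    obtain ⟨x, hx⟩ := hvo
    obtain ⟨y, hy⟩ := huo
    exact ⟨x + 3 * y + 2, by rw [hx, hy]; ring⟩
  have hKM : (K - M) * (K + M) = 3 * u ^ 4 := by
    have : 4 * ((K - M) * (K + M)) = 4 * (3 * u ^ 4) := by
      linear_combination -(2 * K + v ^ 2 + 3 * u ^ 2) * hK - hM
    linarith
  have hv0 : v ≠ 0 := by rintro rfl; simp at hvo
  have hu0 : u ≠ 0 := by rintro rfl; simp at huo
  have hKpos : 0 < K := by
    have : 0 < v ^ 2 + 3 * u ^ 2 := by positivity
    omega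
  obtain ⟨ha, hb⟩ := pos_of_mul_of_add (hKM ▸ by positivity) (show 0 < K - M + (K + M) by linarith)
  have hMu : IsCoprime M u := by
    have h2 : IsCoprime M (v ^ 2 * u ^ 2) := hw ▸ hc.pow_right
    exact (IsCoprime.pow_right_iff two_pos).mp h2.of_mul_right_right
  have hKodd : Odd (K - M) := by
    have h1 : Odd ((K - M) * (K + M)) := by
      rw [hKM]
      have := (Int.odd_pow' (n := 2) two_ne_zero).mp huo
      exact (by decide : Odd (3 : ℤ)).mul this.pow
    exact (Int.odd_mul.mp h1).1
  have hcop2 := isCoprime_factors hKM h3 hMu fun p pp ha hb hp => by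
    have hp2 : ¬ p ∣ 2 := fun h2 => by
      have := (pp.associated_of_dvd Int.prime_two h2).symm.dvd.trans ha
      exact (Int.not_even_iff_odd.mpr hKodd) (even_iff_two_dvd.mpr this)
    have h2 : p ∣ 2 * M := by
      rw [show 2 * M = (K + M) - (K - M) by ring]
      exact dvd_sub hb ha
    exact (pp.dvd_or_dvd h2).resolve_left hp2
  obtain ⟨g, k, hgk, hgku, hq⟩ := second_step (v := v) ha hb hcop2 hKM (by linarith)
  refine ⟨g, k, v, hgk, by rw [hgku, mul_comm, hw], hq, ?_⟩
  rw [hgku, hM]; ring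

/-- If `e = 2f` is even, a solution of the quartic leads to a solution `(g, k)` with
`f² = g²k²u²`. -/
lemma descent_even {M f N : ℤ} (hc : IsCoprime M (2 * f)) (hf : f ≠ 0) (hN : 0 < N)
    (h : N ^ 2 = M ^ 4 - 3 * M ^ 2 * (2 * f) ^ 2 + 3 * (2 * f) ^ 4) :
    ∃ g k u : ℤ, IsCoprime g k ∧ g ^ 2 * k ^ 2 * u ^ 2 = f ^ 2 ∧
      u ^ 2 = g ^ 4 - 3 * g ^ 2 * k ^ 2 + 3 * k ^ 4 ∧
      M ^ 2 = u ^ 4 + 6 * (g ^ 2 * k ^ 2) * u ^ 2 - 3 * (g ^ 2 * k ^ 2) ^ 2 := by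
  have h3 := not_three_dvd hc h
  have hM2 : IsCoprime M 2 := hc.of_mul_right_left
  have hMf : IsCoprime M f := hc.of_mul_right_right
  have hMo : Odd M := by
    by_contra hM
    exact Int.prime_two.not_isUnit
      (hM2.isUnit_of_dvd' (even_iff_two_dvd.mp (Int.not_odd_iff_even.mp hM)) dvd_rfl)
  have hNo : Odd N := by
    have : Odd (N ^ 2) := by
      obtain ⟨x, hx⟩ := hMo.pow (n := 4)
      exact ⟨x - 6 * M ^ 2 * f ^ 2 + 24 * f ^ 4, by rw [h, hx]; ring⟩
    exact (Int.odd_pow' two_ne_zero).mp this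
  obtain ⟨a, ha⟩ : ∃ a, N - M ^ 2 + 6 * f ^ 2 = 2 * a := by
    obtain ⟨x, hx⟩ := hMo.pow (n := 2)
    obtain ⟨y, hy⟩ := hNo
    exact ⟨y - x + 3 * f ^ 2, by rw [hx, hy]; ring⟩
  obtain ⟨b, hb⟩ : ∃ b, b = N - a := ⟨_, rfl⟩
  have hab : a * b = 3 * f ^ 4 := by
    have : 4 * (a * b) = 4 * (3 * f ^ 4) := by
      rw [hb]
      linear_combination h - (2 * N - 2 * a - (N - M ^ 2 + 6 * f ^ 2)) * ha
    linarith
  obtain ⟨hA, hB⟩ := pos_of_mul_of_add (hab ▸ by positivity) (show 0 < a + b by linarith)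
  have hcop := isCoprime_factors hab h3 hMf fun p pp pa pb hp => by
    have h1 : p ∣ 3 * f ^ 2 := by
      rcases hp with hp | hp
      · exact (hp.pow two_ne_zero).mul_left _
      · exact hp.mul_right _
    have h2 : p ∣ M ^ 2 := by
      rw [show M ^ 2 = b - a + 2 * (3 * f ^ 2) by linear_combination -ha - hb]
      exact dvd_add (dvd_sub pb pa) (h1.mul_left 2)
    exact pp.dvd_of_dvd_pow h2
  obtain ⟨u, v, hw, huv⟩ := fourth_power_split hA hB hcop hab
  rcases huv with ⟨hA', hB'⟩ | ⟨hA', hB'⟩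
  · exact absurd (three_dvd_of_neg (M := M) (u := u)
      (x := v ^ 4 + 2 * u ^ 2 * v ^ 2) (by
        linear_combination -hA' + hB' - 6 * hw - ha - hb)) h3
  have hM : M ^ 2 = u ^ 4 + 6 * v ^ 2 * u ^ 2 - 3 * v ^ 4 := by
    linear_combination -hA' + hB' - 6 * hw - ha - hb
  obtain ⟨c, hc'⟩ : ∃ c, u ^ 2 + 3 * v ^ 2 - M = 2 * c := by
    have : Odd ((u ^ 2 + 3 * v ^ 2) ^ 2) := by
      have h1 : (u ^ 2 + 3 * v ^ 2) ^ 2 = M ^ 2 + 2 * (6 * v ^ 4) := by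
        linear_combination -hM
      rw [h1]
      exact hMo.pow.add_even (even_two_mul _)
    obtain ⟨x, hx⟩ := ((Int.odd_pow' two_ne_zero).mp this).sub_odd hMo
    exact ⟨x, by rw [hx]; ring⟩
  obtain ⟨d, hd⟩ : ∃ d, d = c + M := ⟨_, rfl⟩
  have hcd : c * d = 3 * v ^ 4 := by
    have : 4 * (c * d) = 4 * (3 * v ^ 4) := by
      rw [hd]
      linear_combination -hM - (u ^ 2 + 3 * v ^ 2 + M + 2 * c) * hc'
    linarith
  have hv0 : v ≠ 0 := by
    rintro rfl
    exact hf (by simpa using hw.symm)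
  have hsum : c + d = u ^ 2 + 3 * v ^ 2 := by linarith
  obtain ⟨hc0, hd0⟩ := pos_of_mul_of_add (a := c) (b := d)
    (by rw [hcd]; positivity) (by rw [hsum]; positivity)
  have hMv : IsCoprime M v := by
    have h2 : IsCoprime M (u ^ 2 * v ^ 2) := hw ▸ hMf.pow_right
    exact (IsCoprime.pow_right_iff two_pos).mp h2.of_mul_right_right
  have hcop2 := isCoprime_factors hcd h3 hMv fun p pp pc pd _ => by
    have := dvd_sub pd pc
    rwa [hd, add_sub_cancel_left] at this
  obtain ⟨g, k, hgk, hgkv, hq⟩ := second_step hc0 hd0 hcop2 hcd hsum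
  refine ⟨g, k, u, hgk, by rw [hgkv, mul_comm, hw], hq, ?_⟩
  rw [hgkv, hM]; ring

/-- The quartic `N² = M⁴ - 3M²e² + 3e⁴` has only trivial coprime solutions. The descent is on `|e|`;
it may stall, with `|k| = |e|`, only at the trivial solution itself. -/
theorem quartic {M e N : ℤ} (hc : IsCoprime M e) (he : e ≠ 0)
    (h : N ^ 2 = M ^ 4 - 3 * M ^ 2 * e ^ 2 + 3 * e ^ 4) : M ^ 2 = 1 ∧ e ^ 2 = 1 := by
  induction hn : e.natAbs using Nat.strong_induction_on generalizing M e N with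
  | _ n ih =>
  subst hn
  have hN0 : N ≠ 0 := by
    rintro rfl
    -- the right-hand side is a positive definite form in `M²` and `e²`
    have : 0 < e ^ 4 := by positivity
    nlinarith [sq_nonneg (2 * M ^ 2 - 3 * e ^ 2)]
  have hN : 0 < |N| := abs_pos.mpr hN0
  rw [← sq_abs N] at h
  rcases Int.even_or_odd' e with ⟨f, rfl | hf⟩
  · have hf0 : f ≠ 0 := by rintro rfl; simp at he
    obtain ⟨g, k, u, hgk, hfac, hq, hM⟩ := descent_even hc hf0 hN h
    have hk0 : k ≠ 0 := by
      rintro rfl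
      exact hf0 (by simpa using hfac.symm)
    have hkf : k.natAbs ≤ f.natAbs := Int.natAbs_le_of_dvd_ne_zero
      ((Int.pow_dvd_pow_iff two_ne_zero).mp ⟨g ^ 2 * u ^ 2, by rw [← hfac]; ring⟩) hf0
    have hlt : k.natAbs < (2 * f).natAbs := by omega
    obtain ⟨hg1, hk1⟩ := ih _ hlt hgk hk0 hq rfl
    have hu : u ^ 2 = 1 := by
      rw [hq]; linear_combination (g ^ 2 + 1 - 3 * k ^ 2) * hg1 + 3 * k ^ 2 * hk1
    -- here `M² = 1 + 6 - 3 = 4`, contradicting that `M` is coprime to `2f`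
    have hM4 : M ^ 2 = 4 := by
      rw [hM, hg1, hk1, hu, show u ^ 4 = (u ^ 2) ^ 2 by ring, hu]; norm_num
    have h2M : (2 : ℤ) ∣ M := Int.prime_two.dvd_of_dvd_pow (n := 2) ⟨2, by rw [hM4]; norm_num⟩
    exact absurd (hc.isUnit_of_dvd' h2M (Dvd.intro _ rfl)) Int.prime_two.not_isUnit
  · obtain ⟨g, k, v, hgk, hfac, hq, hM⟩ := descent_odd hc ⟨f, hf⟩ hN h
    have hk0 : k ≠ 0 := by
      rintro rfl
      exact he (by simpa using hfac.symm)
    have hke : k.natAbs ≤ e.natAbs := Int.natAbs_le_of_dvd_ne_zero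
      ((Int.pow_dvd_pow_iff two_ne_zero).mp ⟨g ^ 2 * v ^ 2, by rw [← hfac]; ring⟩) he
    have hgk1 : g ^ 2 = 1 ∧ k ^ 2 = 1 := by
      rcases hke.lt_or_eq with hlt | heq
      · exact ih _ hlt hgk hk0 hq rfl
      · have hke2 : k ^ 2 = e ^ 2 := Int.natAbs_eq_iff_sq_eq.mp heq
        have hk2 : k ^ 2 ≠ 0 := pow_ne_zero _ hk0
        have hgv : g ^ 2 * v ^ 2 = 1 := by
          refine mul_left_cancel₀ hk2 ?_
          rw [← hke2] at hfac; linear_combination hfac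
        have hg1 : g ^ 2 = 1 := Int.eq_one_of_mul_eq_one_right (sq_nonneg _) hgv
        have hv1 : v ^ 2 = 1 := by rwa [hg1, one_mul] at hgv
        refine ⟨hg1, ?_⟩
        have h0 : k ^ 2 * (k ^ 2 - 1) = 0 := by
          have h3 : 3 * (k ^ 2 * (k ^ 2 - 1)) = 0 := by
            linear_combination hv1 - hq - (g ^ 2 + 1 - 3 * k ^ 2) * hg1
          omega
        linarith [(mul_eq_zero.mp h0).resolve_left hk2]
    obtain ⟨hg1, hk1⟩ := hgk1
    have hv : v ^ 2 = 1 := by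
      rw [hq]; linear_combination (g ^ 2 + 1 - 3 * k ^ 2) * hg1 + 3 * k ^ 2 * hk1
    rw [hg1, hk1, hv, show v ^ 4 = (v ^ 2) ^ 2 by ring, hv] at hM
    rw [hg1, hk1, hv] at hfac
    exact ⟨by linarith, by linarith⟩

lemma eq_sq_of_coprime_of_pos {a b c : ℤ} (hab : IsCoprime a b) (ha : 0 < a)
    (h : a * b = c ^ 2) : ∃ x, a = x ^ 2 := by
  obtain ⟨x, hx | hx⟩ := Int.sq_of_isCoprime hab h
  · exact ⟨x, hx⟩
  · nlinarith [sq_nonneg x]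

lemma square_product {x y z : ℤ} (hx : 0 < x) (hy : 0 < y) (hc : IsCoprime x y)
    (h3 : ¬ (3 : ℤ) ∣ x) (h : x * y * (x ^ 2 - 3 * x * y + 3 * y ^ 2) = z ^ 2) :
    x = 1 ∧ y = 1 := by
  have hQ : 0 < x ^ 2 - 3 * x * y + 3 * y ^ 2 := by
    nlinarith [sq_nonneg (2 * x - 3 * y), pow_pos hy 2]
  have hyQ : IsCoprime y (x ^ 2 - 3 * x * y + 3 * y ^ 2) := by
    rw [show x ^ 2 - 3 * x * y + 3 * y ^ 2 = x ^ 2 + y * (3 * y - 3 * x) by ring]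
    exact hc.symm.pow_right.add_mul_left_right _
  have hxQ : IsCoprime x (x ^ 2 - 3 * x * y + 3 * y ^ 2) := by
    have hx3 : IsCoprime x 3 :=
      ((Prime.coprime_iff_not_dvd Int.prime_three).mpr h3).symm
    rw [show x ^ 2 - 3 * x * y + 3 * y ^ 2 = 3 * y ^ 2 + x * (x - 3 * y) by ring]
    exact (hx3.mul_right hc.pow_right).add_mul_left_right _
  obtain ⟨M, rfl⟩ := eq_sq_of_coprime_of_pos (hc.mul_right hxQ) hx
    (c := z) (by rw [← h]; ring)
  obtain ⟨e, rfl⟩ := eq_sq_of_coprime_of_pos (hc.symm.mul_right hyQ) hy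
    (c := z) (by rw [← h]; ring)
  obtain ⟨N, hN⟩ := eq_sq_of_coprime_of_pos (hxQ.symm.mul_right hyQ.symm) hQ
    (c := z) (by rw [← h]; ring)
  refine quartic (N := N) ((IsCoprime.pow_iff two_pos two_pos).mp hc) ?_ ?_
  · rintro rfl; simp at hy
  · rw [← hN]; ring

lemma first_coordinate {t U : ℚ} (h : U ^ 2 = t * (t ^ 2 - 3 * t + 3)) :
    t = 0 ∨ t = 1 ∨ t = 3 := by
  rcases eq_or_ne t 0 with h0 | h0
  · exact Or.inl h0
  right
  have ht : 0 < t := by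
    have hpos : 0 < t ^ 2 - 3 * t + 3 := by nlinarith [sq_nonneg (2 * t - 3)]
    have : 0 ≤ t := nonneg_of_mul_nonneg_left (h ▸ sq_nonneg U) hpos
    exact this.lt_of_ne' h0
  obtain ⟨c, hcn⟩ : ∃ c, c = t.num := ⟨_, rfl⟩
  obtain ⟨b, hbn⟩ : ∃ b : ℤ, b = t.den := ⟨_, rfl⟩
  have hc : 0 < c := hcn ▸ Rat.num_pos.mpr ht
  have hb : 0 < b := by rw [hbn]; exact_mod_cast t.den_pos
  have hcop : IsCoprime c b := by rw [hcn, hbn]; exact Rat.isCoprime_num_den t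
  have htcb : t = c / b := by
    rw [hcn, hbn]; exact_mod_cast (Rat.num_div_den t).symm
  have hbq : (b : ℚ) ≠ 0 := by exact_mod_cast hb.ne'
  have hsq : IsSquare (c * b * (c ^ 2 - 3 * c * b + 3 * b ^ 2)) := by
    rw [← Rat.isSquare_intCast_iff]
    refine ⟨U * b ^ 2, ?_⟩
    have : U * b ^ 2 * (U * b ^ 2) = U ^ 2 * b ^ 4 := by ring
    rw [this, h, htcb]
    push_cast
    field_simp
  obtain ⟨z, hz⟩ := hsq
  by_cases h3 : (3 : ℤ) ∣ c
  · obtain ⟨d, rfl⟩ := h3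
    have h3z : (3 : ℤ) ∣ z := Int.prime_three.dvd_of_dvd_pow (n := 2)
      ⟨d * b * ((3 * d) ^ 2 - 3 * (3 * d) * b + 3 * b ^ 2), by rw [pow_two, ← hz]; ring⟩
    obtain ⟨w, rfl⟩ := h3z
    have h3b : ¬ (3 : ℤ) ∣ b := fun h =>
      Int.prime_three.not_isUnit (hcop.isUnit_of_dvd' (Dvd.intro _ rfl) h)
    obtain ⟨rfl, rfl⟩ := square_product (z := w) hb (by omega) hcop.of_mul_left_right.symm h3b
      (by linarith)
    right; rw [htcb]; norm_num
  · obtain ⟨rfl, rfl⟩ := square_product (z := z) hc hb hcop h3 (by rw [hz]; ring)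
    left; rw [htcb]; norm_num

theorem stmt_8 :
    {p : ℚ × ℚ | p.2 ^ 2 = p.1 ^ 3 + 1} =
      {((-1 : ℚ), (0 : ℚ)), (0, 1), (0, -1), (2, 3), (2, -3)} := by
  ext ⟨V, U⟩
  simp only [Set.mem_ofPred_eq, Set.mem_insert_iff, Set.mem_singleton_iff, Prod.mk.injEq]
  constructor
  · intro h
    rcases first_coordinate (t := V + 1) (U := U) (by rw [h]; ring) with ht | ht | ht
    · obtain rfl : V = -1 := by linarith
      left; exact ⟨rfl, by norm_num at h; exact h⟩
    · obtain rfl : V = 0 := by linarith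
      have : U ^ 2 = 1 ^ 2 := by rw [h]; norm_num
      rcases sq_eq_sq_iff_eq_or_eq_neg.mp this with rfl | rfl <;> simp
    · obtain rfl : V = 2 := by linarith
      have : U ^ 2 = 3 ^ 2 := by rw [h]; norm_num
      rcases sq_eq_sq_iff_eq_or_eq_neg.mp this with rfl | rfl <;> simp
  · rintro (⟨rfl, rfl⟩ | ⟨rfl, rfl⟩ | ⟨rfl, rfl⟩ | ⟨rfl, rfl⟩ | ⟨rfl, rfl⟩) <;> norm_num
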